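/- Let k be a perfect field and let X and Y be reduced normal schemes of finite type over k. Then the product X ×_k Y is normal. -/

import Mathlib

/-!
Statement 2.  Let `k` be a perfect field and `X`, `Y` reduced normal schemes of
finite type over `k`.  Then `X ×_k Y` is normal.

Normality of a scheme is expressed by saying that all stalks are
integrally closed domains.
-/

open AlgebraicGeometry CategoryTheory CategoryTheory.Limits

/-- A scheme is normal if all of its local rings are integrally closed domains. -/
def IsNormalScheme (X : Scheme) : Prop :=
  ∀ x : X, IsDomain (X.presheaf.stalk x) ∧ IsIntegrallyClosed (X.presheaf.stalk x)

open scoped TensorProduct nonZeroDivisors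

lemma mvPoly_intClosed_fin {A : Type} [CommRing A] [IsDomain A] [IsIntegrallyClosed A] (n : ℕ) :
    IsIntegrallyClosed (MvPolynomial (Fin n) A) := by
  induction n with
  | zero => exact IsIntegrallyClosed.of_equiv (MvPolynomial.isEmptyRingEquiv A (Fin 0)).symm
  | succ n ih => exact IsIntegrallyClosed.of_equiv (MvPolynomial.finSuccEquiv A n).symm.toRingEquiv

lemma mvPoly_intClosed {A σ : Type} [Finite σ] [CommRing A] [IsDomain A] [IsIntegrallyClosed A] :
    IsIntegrallyClosed (MvPolynomial σ A) := by
  obtain ⟨n, ⟨e⟩⟩ := Finite.exists_equiv_fin σ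
  have := mvPoly_intClosed_fin (A := A) n
  exact IsIntegrallyClosed.of_equiv (MvPolynomial.renameEquiv A e).symm.toRingEquiv

/-- ring hom version of integrally closed -/
def HomIC {R Q : Type} [CommRing R] [CommRing Q] (f : R →+* Q) : Prop :=
  Function.Injective f ∧ ∀ q, f.IsIntegralElem q → ∃ r, f r = q

structure GoodHom {R Q : Type} [CommRing R] [CommRing Q] (f : R →+* Q) : Prop where
  art : IsArtinianRing Q
  red : _root_.IsReduced Q
  ic : HomIC f
  frac : ∀ q, ∃ r r', IsUnit (f r) ∧ f r * q = f r'

open scoped IntermediateField.algebraAdjoinAdjoin in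
lemma tensor_adjoin {k A L : Type} [Field k] [CommRing A] [IsDomain A] [IsIntegrallyClosed A]
    [Algebra k A] [Field L] [Algebra k L] (s : Finset L)
    (hs : AlgebraicIndependent k ((↑) : s → L)) :
    IsDomain (A ⊗[k] IntermediateField.adjoin k (s : Set L)) ∧
    IsIntegrallyClosed (A ⊗[k] IntermediateField.adjoin k (s : Set L)) := by
  have hr : Set.range ((↑) : s → L) = (s : Set L) := by simp
  rw [← hr]
  let P := Algebra.adjoin k (Set.range ((↑) : s → L))
  let e : A ⊗[k] P ≃+* MvPolynomial s A :=
    ((Algebra.TensorProduct.congr AlgEquiv.refl hs.aevalEquiv.symm).trans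
      (MvPolynomial.algebraTensorAlgEquiv k A |>.restrictScalars k)).toRingEquiv
  have : IsDomain (A ⊗[k] P) := e.toMulEquiv.isDomain _
  have := mvPoly_intClosed (A := A) (σ := s)
  have : IsIntegrallyClosed (A ⊗[k] P) := .of_equiv e.symm
  let E := IntermediateField.adjoin k (Set.range ((↑) : s → L))
  have hle : (P⁰).map (Algebra.TensorProduct.includeRight (R := k) (A := A)) ≤ (A ⊗[k] P)⁰ := by
    rintro _ ⟨x, hx, rfl⟩
    refine mem_nonZeroDivisors_of_ne_zero ?_
    intro h
    have hi : Function.Injective (Algebra.TensorProduct.includeRight (R := k) (A := A) (B := P)) :=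
      Algebra.TensorProduct.includeRight_injective (FaithfulSMul.algebraMap_injective k A)
    exact nonZeroDivisors.ne_zero hx (hi (h.trans (map_zero _).symm))
  let _ : Algebra (A ⊗[k] P) (A ⊗[k] E) :=
    (Algebra.TensorProduct.map (AlgHom.id A A) (IsScalarTower.toAlgHom k P E)).toAlgebra
  have : IsScalarTower A (A ⊗[k] P) (A ⊗[k] E) := 
    IsScalarTower.of_algebraMap_eq (R := A) (S := A ⊗[k] P) (A := A ⊗[k] E) fun x ↦ by
      change x ⊗ₜ[k] (1 : E) = Algebra.TensorProduct.map (AlgHom.id A A)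
        (IsScalarTower.toAlgHom k P E) (x ⊗ₜ[k] (1 : P))
      rw [Algebra.TensorProduct.map_tmul, map_one]; rfl
  have : IsLocalization ((P⁰).map (Algebra.TensorProduct.includeRight (R := k) (A := A)))
      (A ⊗[k] E) := IsLocalization.tensorProduct_tensorProduct_right k A P⁰ E <| by
    ext; simp [RingHom.algebraMap_toAlgebra]
  exact ⟨IsLocalization.isDomain_of_le_nonZeroDivisors (A ⊗[k] E) hle,
    isIntegrallyClosed_of_isLocalization _ _ hle⟩

lemma GoodHom.comp_equiv {R R' Q : Type} [CommRing R] [CommRing R'] [CommRing Q] {f : R →+* Q}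
    (h : GoodHom f) (e : R' ≃+* R) : GoodHom (f.comp e.toRingHom) where
  art := h.art
  red := h.red
  ic := by
    refine ⟨h.ic.1.comp e.injective, fun q hq ↦ ?_⟩
    obtain ⟨r, hr⟩ := h.ic.2 q (hq.of_comp)
    exact ⟨e.symm r, by simpa using hr⟩
  frac q := by
    obtain ⟨r, r', h1, h2⟩ := h.frac q
    exact ⟨e.symm r, e.symm r', by simpa using h1, by simpa using h2⟩

lemma good_etale (D S : Type) [CommRing D] [IsDomain D] [IsIntegrallyClosed D]
    [CommRing S] [Algebra D S] [Algebra.Etale D S] [Module.Finite D S] :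
    GoodHom (algebraMap S (S ⊗[D] FractionRing D)) := by
  let F := FractionRing D
  let e : S ⊗[D] F ≃ₐ[D] F ⊗[D] S := Algebra.TensorProduct.comm D S F
  have h1 : IsArtinianRing (F ⊗[D] S) := .of_finite F _
  have h2 : _root_.IsReduced (F ⊗[D] S) := Algebra.FormallyUnramified.isReduced_of_field F _
  have hinj : Function.Injective (algebraMap S (S ⊗[D] F)) :=
    Algebra.TensorProduct.includeLeft_injective (S := S) (IsFractionRing.injective D F)
  refine ⟨e.toRingEquiv.symm.surjective.isArtinianRing, isReduced_of_injective e e.injective, ⟨hinj, ?_⟩, ?_⟩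
  · intro q hq
    have hb := (TensorProduct.toIntegralClosure_bijective_of_smooth (R := D) (S := S) (B := F)).2
    obtain ⟨x, hx⟩ := hb ⟨q, hq⟩
    have hx' : Algebra.TensorProduct.map (.id S S) (integralClosure D F).val x = q :=
      congrArg Subtype.val hx
    rw [← hx']
    clear hx hx' hq
    induction x with
    | zero => exact ⟨0, by simp⟩
    | add x y hx hy =>
      obtain ⟨a, ha⟩ := hx
      obtain ⟨b, hb⟩ := hy
      exact ⟨a + b, by rw [map_add, map_add, ha, hb]⟩
    | tmul s y =>
      obtain ⟨d, hd⟩ := IsIntegrallyClosed.algebraMap_eq_of_integral (R := D) y.2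
      refine ⟨d • s, ?_⟩
      have h3 : (d • s) ⊗ₜ[D] (1 : F) = s ⊗ₜ[D] (algebraMap D F d) := by
        rw [TensorProduct.smul_tmul, Algebra.smul_def, mul_one]
      rw [Algebra.TensorProduct.map_tmul]
      exact h3.trans (by rw [hd]; rfl)
  · intro q
    obtain ⟨⟨a, ⟨m, hm⟩⟩, h⟩ := IsLocalization.surj (Algebra.algebraMapSubmonoid S D⁰) q
    exact ⟨m, a, IsLocalization.map_units (S ⊗[D] F) ⟨m, hm⟩, by rw [mul_comm]; exact h⟩

lemma good_sep (k A E L : Type) [Field k] [CommRing A] [Algebra k A] [Field E] [Algebra k E]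
    [Field L] [Algebra k L] [Algebra E L] [IsScalarTower k E L] [Algebra.EssFiniteType k L]
    [Algebra.IsSeparable E L] (hD : IsDomain (A ⊗[k] E)) (hD' : IsIntegrallyClosed (A ⊗[k] E)) :
    ∃ (Q : Type) (_ : CommRing Q) (f : A ⊗[k] L →+* Q), GoodHom f := by
  have : Algebra.EssFiniteType E L := .of_comp k E L
  have : Algebra.FormallyEtale E L := .of_isSeparable E L
  have : Module.Finite E L := Algebra.FormallyUnramified.finite_of_free E L
  have : Algebra.FinitePresentation E L := Algebra.FinitePresentation.of_finiteType.mp inferInstance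
  have : Algebra.Etale E L := {}
  let e₁ : E ⊗[k] A ≃+* A ⊗[k] E := (Algebra.TensorProduct.comm k E A).toRingEquiv
  have : IsDomain (E ⊗[k] A) := e₁.toMulEquiv.isDomain (A ⊗[k] E)
  have : IsIntegrallyClosed (E ⊗[k] A) := .of_equiv (R := A ⊗[k] E) e₁.symm
  have h := good_etale (E ⊗[k] A) ((E ⊗[k] A) ⊗[E] L)
  let e₂ : (E ⊗[k] A) ⊗[E] L ≃+* L ⊗[E] (E ⊗[k] A) :=
    (Algebra.TensorProduct.comm E (E ⊗[k] A) L).toRingEquiv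
  let e₃ : L ⊗[E] (E ⊗[k] A) ≃+* L ⊗[k] A :=
    (Algebra.TensorProduct.cancelBaseChange k E E L A).toRingEquiv
  let e₄ : A ⊗[k] L ≃+* L ⊗[k] A := (Algebra.TensorProduct.comm k A L).toRingEquiv
  exact ⟨_, _, _, h.comp_equiv (e₄.trans (e₂.trans e₃).symm)⟩

lemma good_field (k A L : Type) [Field k] [PerfectField k] [CommRing A] [IsDomain A]
    [IsIntegrallyClosed A] [Algebra k A] [Field L] [Algebra k L] [Algebra.EssFiniteType k L] :
    ∃ (Q : Type) (_ : CommRing Q) (f : A ⊗[k] L →+* Q), GoodHom f := by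
  obtain ⟨s, hs, H⟩ := exists_isTranscendenceBasis_and_isSeparable_of_perfectField k L
  obtain ⟨hD, hD'⟩ := tensor_adjoin (k := k) (A := A) s hs.1
  exact good_sep k A (IntermediateField.adjoin k (s : Set L)) L hD hD'

lemma homIC_of_isLocalization {R S Q : Type} [CommRing R] [CommRing S] [CommRing Q] [Algebra R S]
    (M : Submonoid R) [IsLocalization M S] (hinj : Function.Injective (algebraMap R S))
    {f : R →+* Q} (hf : GoodHom f) : HomIC (algebraMap R S) := by
  have := hf.art
  have hu : ∀ m : M, IsUnit (f m) := by
    intro m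
    refine IsArtinianRing.isUnit_of_mem_nonZeroDivisors ?_
    rw [mem_nonZeroDivisors_iff_right]
    intro q hq
    obtain ⟨r, r', h1, h2⟩ := hf.frac q
    have h3 : f (r' * m) = f 0 := by rw [map_mul, ← h2, mul_assoc, hq]; simp
    have h4 := hf.ic.1 h3
    have h5 : algebraMap R S r' * algebraMap R S m = 0 := by rw [← map_mul, h4, map_zero]
    rw [(IsLocalization.map_units S m).mul_left_eq_zero] at h5
    have h6 : r' = 0 := hinj (by rw [h5, map_zero])
    rw [h6, map_zero, h1.mul_right_eq_zero] at h2
    exact h2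
  let h : S →+* Q := IsLocalization.lift hu
  have hcomp : h.comp (algebraMap R S) = f := IsLocalization.lift_comp hu
  have hh : Function.Injective h := by
    rw [injective_iff_map_eq_zero]
    intro x hx
    obtain ⟨⟨a, m⟩, hm⟩ := IsLocalization.surj M x
    have : f a = f 0 := by
      rw [← hcomp, RingHom.comp_apply, ← hm, map_mul, hx]; simp
    rw [hf.ic.1 this, map_zero, (IsLocalization.map_units S m).mul_left_eq_zero] at hm
    exact hm
  refine ⟨hinj, fun y hy ↦ ?_⟩
  have hy' : f.IsIntegralElem (h y) := by
    obtain ⟨p, hp, hp'⟩ := hy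
    refine ⟨p, hp, ?_⟩
    rw [← hcomp, ← Polynomial.hom_eval₂, hp', map_zero]
  obtain ⟨z, hz⟩ := hf.ic.2 _ hy'
  exact ⟨z, hh (by rw [← hz, ← hcomp]; rfl)⟩

lemma inter_tensor {k A K B L : Type} [Field k] [AddCommGroup A] [Module k A]
    [AddCommGroup K] [Module k K] [AddCommGroup B] [Module k B] [AddCommGroup L] [Module k L]
    (i : A →ₗ[k] K) (j : B →ₗ[k] L) (hi : Function.Injective i) (hj : Function.Injective j)
    (y : A ⊗[k] L) (z : K ⊗[k] B) (h : i.rTensor L y = j.lTensor K z) :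
    ∃ w : A ⊗[k] B, j.lTensor A w = y := by
  let π := i.range.mkQ
  have hex : Function.Exact i π := by
    rw [LinearMap.exact_iff]; simp [π]
  have hexB := rTensor_exact B hex (Submodule.mkQ_surjective _)
  have hexL := rTensor_exact L hex (Submodule.mkQ_surjective _)
  have h1 : π.rTensor B z = 0 := by
    have hJ : Function.Injective (j.lTensor (K ⧸ i.range)) :=
      Module.Flat.lTensor_preserves_injective_linearMap j hj
    apply hJ
    rw [map_zero]
    have h2 : j.lTensor (K ⧸ i.range) (π.rTensor B z) = π.rTensor L (j.lTensor K z) := by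
      rw [← LinearMap.comp_apply, ← LinearMap.comp_apply, LinearMap.lTensor_comp_rTensor,
        LinearMap.rTensor_comp_lTensor]
    rw [h2, ← h]
    exact hexL.apply_apply_eq_zero y
  obtain ⟨w, rfl⟩ := (hexB z).mp h1
  refine ⟨w, ?_⟩
  have hI : Function.Injective (i.rTensor L) :=
    Module.Flat.rTensor_preserves_injective_linearMap i hi
  apply hI
  rw [h, ← LinearMap.comp_apply, ← LinearMap.comp_apply, LinearMap.lTensor_comp_rTensor,
        LinearMap.rTensor_comp_lTensor]

lemma loc_tensor (k B K L : Type) [Field k] [CommRing B] [IsDomain B] [Algebra k B]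
    [CommRing K] [Algebra k K] [Field L] [Algebra k L] [Algebra B L] [IsScalarTower k B L]
    [IsFractionRing B L] 
    {Q : Type} [CommRing Q] {f : B ⊗[k] K →+* Q} (hf : GoodHom f) :
    HomIC (Algebra.TensorProduct.map (IsScalarTower.toAlgHom k B L) (AlgHom.id k K)).toRingHom := by
  let _ : Algebra (B ⊗[k] K) (L ⊗[k] K) :=
    (Algebra.TensorProduct.map (IsScalarTower.toAlgHom k B L) (AlgHom.id k K)).toRingHom.toAlgebra
  have : IsScalarTower B (B ⊗[k] K) (L ⊗[k] K) :=
    IsScalarTower.of_algebraMap_eq (R := B) (S := B ⊗[k] K) (A := L ⊗[k] K) fun x ↦ by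
      change algebraMap B L x ⊗ₜ[k] (1 : K) = Algebra.TensorProduct.map
        (IsScalarTower.toAlgHom k B L) (AlgHom.id k K) (x ⊗ₜ[k] (1 : K))
      rw [Algebra.TensorProduct.map_tmul]; rfl
  have := IsLocalization.tensorProduct_tensorProduct k K B⁰ L <| by
    ext x
    change Algebra.TensorProduct.map (IsScalarTower.toAlgHom k B L) (AlgHom.id k K) 
      ((1 : B) ⊗ₜ[k] x) = (1 : L) ⊗ₜ x
    rw [Algebra.TensorProduct.map_tmul, map_one]; rfl
  refine homIC_of_isLocalization (S := L ⊗[k] K) (Algebra.algebraMapSubmonoid (B ⊗[k] K) B⁰) ?_ hf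
  exact Module.Flat.rTensor_preserves_injective_linearMap (M := K)
    (IsScalarTower.toAlgHom k B L).toLinearMap (IsFractionRing.injective B L)

lemma exists_mul_tensor (k A B L : Type) [Field k] [CommRing B] [IsDomain B] [Algebra k B]
    [CommRing A] [Algebra k A] [Field L] [Algebra k L] [Algebra B L] [IsScalarTower k B L]
    [IsFractionRing B L] (x : A ⊗[k] L) : ∃ b ∈ B⁰, ∃ w : A ⊗[k] B, 
      Algebra.TensorProduct.map (AlgHom.id k A) (IsScalarTower.toAlgHom k B L) w =
        ((1 : A) ⊗ₜ[k] (algebraMap B L b)) * x := by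
  induction x with
  | zero => exact ⟨1, one_mem _, 0, by simp⟩
  | add x y hx hy =>
    obtain ⟨b, hb, w, hw⟩ := hx
    obtain ⟨c, hc, v, hv⟩ := hy
    refine ⟨b * c, mul_mem hb hc, (1 ⊗ₜ c) * w + (1 ⊗ₜ b) * v, ?_⟩
    have h1 : (1 : A) ⊗ₜ[k] (algebraMap B L (b * c)) = 
      (1 : A) ⊗ₜ[k] (algebraMap B L b) * (1 : A) ⊗ₜ[k] (algebraMap B L c) := by simp
    rw [h1, map_add, map_mul, map_mul, hw, hv, Algebra.TensorProduct.map_tmul, 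
      Algebra.TensorProduct.map_tmul, map_one]
    simp only [IsScalarTower.coe_toAlgHom']
    ring
  | tmul a l =>
    obtain ⟨⟨c, b⟩, h⟩ := IsLocalization.surj B⁰ l
    refine ⟨b, b.2, a ⊗ₜ c, ?_⟩
    simp [← h, mul_comm]

lemma good_tensor (k A B : Type) [Field k] [PerfectField k] [CommRing A] [IsDomain A]
    [IsIntegrallyClosed A] [Algebra k A] [CommRing B] [IsDomain B]
    [IsIntegrallyClosed B] [Algebra k B] [Algebra.EssFiniteType k A] [Algebra.EssFiniteType k B] :
    ∃ (Q : Type) (_ : CommRing Q) (f : A ⊗[k] B →+* Q), GoodHom f := by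
  let K := FractionRing A
  let L := FractionRing B
  obtain ⟨Q, _, f, hf⟩ := good_field k A L
  obtain ⟨Q', _, f', hf'⟩ := good_field k B K
  have hic := loc_tensor k B K L hf'
  let g : A ⊗[k] B →ₐ[k] A ⊗[k] L :=
    Algebra.TensorProduct.map (AlgHom.id k A) (IsScalarTower.toAlgHom k B L)
  have hg : Function.Injective g := Module.Flat.lTensor_preserves_injective_linearMap (M := A)
    (IsScalarTower.toAlgHom k B L).toLinearMap (IsFractionRing.injective B L)
  refine ⟨Q, _, f.comp g.toRingHom, hf.art, hf.red, ⟨hf.ic.1.comp hg, ?_⟩, ?_⟩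
  · intro q hq
    obtain ⟨y, rfl⟩ := hf.ic.2 q hq.of_comp
    -- y is integral over A ⊗ B
    have hy : g.toRingHom.IsIntegralElem y := by
      obtain ⟨p, hp, hp'⟩ := hq
      refine ⟨p, hp, hf.ic.1 ?_⟩
      rw [Polynomial.hom_eval₂, hp', map_zero]
    let i : A ⊗[k] L →ₐ[k] K ⊗[k] L :=
      Algebra.TensorProduct.map (IsScalarTower.toAlgHom k A K) (AlgHom.id k L)
    let c : K ⊗[k] L ≃ₐ[k] L ⊗[k] K := Algebra.TensorProduct.comm k K L
    let j : B ⊗[k] K →ₐ[k] L ⊗[k] K :=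
      Algebra.TensorProduct.map (IsScalarTower.toAlgHom k B L) (AlgHom.id k K)
    let u : A ⊗[k] B →ₐ[k] B ⊗[k] K :=
      (Algebra.TensorProduct.comm k K B).toAlgHom.comp
        (Algebra.TensorProduct.map (IsScalarTower.toAlgHom k A K) (AlgHom.id k B))
    have hsq : (c.toAlgHom.comp i).comp g = j.comp u := by
      ext <;> simp [c, i, g, j, u]
    have hy' : j.toRingHom.IsIntegralElem (c (i y)) := by
      obtain ⟨p, hp, hp'⟩ := hy
      refine ⟨p.map u.toRingHom, hp.map _, ?_⟩
      rw [Polynomial.eval₂_map]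
      have : j.toRingHom.comp u.toRingHom = (c.toAlgHom.comp i).toRingHom.comp g.toRingHom :=
        congrArg AlgHom.toRingHom hsq.symm
      rw [this]
      change Polynomial.eval₂ _ ((c.toAlgHom.comp i).toRingHom y) p = 0
      rw [← Polynomial.hom_eval₂, hp', map_zero]
    obtain ⟨z, hz⟩ := hic.2 _ hy'
    obtain ⟨w, hw⟩ := inter_tensor (IsScalarTower.toAlgHom k A K).toLinearMap
      (IsScalarTower.toAlgHom k B L).toLinearMap (IsFractionRing.injective A K)
      (IsFractionRing.injective B L) y (Algebra.TensorProduct.comm k B K z) (by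
        apply c.injective
        refine Eq.trans hz.symm ?_
        have h3 : j = (c.toAlgHom.comp (Algebra.TensorProduct.map (AlgHom.id k K)
          (IsScalarTower.toAlgHom k B L))).comp (Algebra.TensorProduct.comm k B K).toAlgHom := by
          ext <;> simp [c, j]
        exact DFunLike.congr_fun h3 z)
    exact ⟨w, congrArg f hw⟩
  · intro q
    obtain ⟨r, r', h1, h2⟩ := hf.frac q
    obtain ⟨b, hb, w, hw⟩ := exists_mul_tensor k A B L r
    obtain ⟨b', hb', w', hw'⟩ := exists_mul_tensor k A B L r'
    have hu : ∀ b ∈ B⁰, IsUnit ((1 : A) ⊗ₜ[k] (algebraMap B L b)) := fun b hb ↦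
      (IsLocalization.map_units L ⟨b, hb⟩).map (Algebra.TensorProduct.includeRight (R := k) (A := A))
    refine ⟨(1 ⊗ₜ b') * w, (1 ⊗ₜ b) * w', ?_, ?_⟩
    · change IsUnit (f (g _))
      rw [map_mul, hw, map_mul, map_mul]
      refine IsUnit.mul ?_ (IsUnit.mul ((hu b hb).map f) h1)
      simpa [g] using (hu b' hb').map f
    · change f (g _) * q = f (g _)
      rw [map_mul, map_mul g, hw, hw', map_mul, map_mul, map_mul, map_mul, ← h2]
      simp only [g, Algebra.TensorProduct.map_tmul, map_one, IsScalarTower.coe_toAlgHom']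
      ring

attribute [local instance] Algebra.TensorProduct.rightAlgebra in
lemma good_localization {R Q Rp : Type} [CommRing R] [CommRing Q] {f : R →+* Q} (hf : GoodHom f)
    [CommRing Rp] [IsLocalRing Rp] [Algebra R Rp] (M : Submonoid R) [IsLocalization M Rp] :
    IsDomain Rp ∧ IsIntegrallyClosed Rp := by
  have := hf.art
  have := hf.red
  let _ : Algebra R Q := f.toAlgebra
  have : Module.Flat R Rp := IsLocalization.flat Rp M
  have hinj : Function.Injective (algebraMap Rp (Rp ⊗[R] Q)) :=
    Algebra.TensorProduct.includeLeft_injective (S := Rp) hf.ic.1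
  have hloc : IsLocalization (Algebra.algebraMapSubmonoid Q M) (Rp ⊗[R] Q) :=
    IsLocalization.tensorRight Rp M
  have h1 : IsArtinianRing (Rp ⊗[R] Q) :=
    IsArtinianRing.localization_artinian (Algebra.algebraMapSubmonoid Q M) (Rp ⊗[R] Q)
  have h2 : _root_.IsReduced (Rp ⊗[R] Q) :=
    isReduced_localizationPreserves (Algebra.algebraMapSubmonoid Q M) (Rp ⊗[R] Q) inferInstance
  have : Nontrivial (Rp ⊗[R] Q) := hinj.nontrivial
  have hic : ∀ q : Rp ⊗[R] Q, IsIntegral Rp q → ∃ r, algebraMap Rp (Rp ⊗[R] Q) r = q := by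
    intro q hq
    have hb := (TensorProduct.toIntegralClosure_bijective_of_isLocalization
      (R := R) (S := Rp) (B := Q) M).2
    obtain ⟨x, hx⟩ := hb ⟨q, hq⟩
    have hx' : Algebra.TensorProduct.map (.id Rp Rp) (integralClosure R Q).val x = q :=
      congrArg Subtype.val hx
    rw [← hx']
    clear hx hx' hq
    induction x with
    | zero => exact ⟨0, by simp⟩
    | add x y hx hy =>
      obtain ⟨a, ha⟩ := hx
      obtain ⟨b, hb⟩ := hy
      exact ⟨a + b, by rw [map_add, map_add, ha, hb]⟩
    | tmul s y =>
      obtain ⟨d, hd⟩ := hf.ic.2 y.1 y.2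
      refine ⟨d • s, ?_⟩
      have h3 : (d • s) ⊗ₜ[R] (1 : Q) = s ⊗ₜ[R] (algebraMap R Q d) := by
        rw [TensorProduct.smul_tmul, Algebra.smul_def, mul_one]
      rw [Algebra.TensorProduct.map_tmul]
      have hd' : algebraMap R Q d = y.1 := hd
      exact h3.trans (by rw [hd']; rfl)
  have hfield : IsField (Rp ⊗[R] Q) := by
    refine ⟨exists_pair_ne _, mul_comm, fun {a} ha ↦ ?_⟩
    obtain ⟨n, b, hb⟩ := IsArtinian.exists_pow_succ_smul_dvd a (1 : Rp ⊗[R] Q)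
    simp only [smul_eq_mul, mul_one] at hb
    have h0 : a * (1 - a * b) = 0 := by
      apply _root_.IsReduced.eq_zero
      refine ⟨n + 1, ?_⟩
      have : a ^ n * (1 - a * b) = 0 := by
        rw [pow_succ] at hb
        linear_combination -hb
      calc (a * (1 - a * b)) ^ (n + 1) = a * (1 - a * b) ^ n * (a ^ n * (1 - a * b)) := by
            rw [mul_pow, pow_succ, pow_succ]; ring
        _ = 0 := by rw [this, mul_zero]
    have hidem : (a * b) ^ 2 = a * b := by linear_combination (-b) * h0
    obtain ⟨e, he⟩ := hic (a * b) ⟨Polynomial.X ^ 2 - Polynomial.X, by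
      apply Polynomial.monic_X_pow_sub
      simp, by simp [hidem]⟩
    have he2 : e * (1 - e) = 0 := hinj (by
      rw [map_zero, map_mul, map_sub, map_one, he]; linear_combination -hidem)
    rcases IsLocalRing.isUnit_or_isUnit_one_sub_self e with h | h
    · rw [h.mul_right_eq_zero] at he2
      exact ⟨b, by rw [← he, ← sub_eq_zero.mp he2, map_one]⟩
    · rw [h.mul_left_eq_zero] at he2
      rw [he2, map_zero] at he
      rw [← he] at h0
      simp at h0
      exact absurd h0 ha
  let _ : Field (Rp ⊗[R] Q) := hfield.toField
  have : FaithfulSMul Rp (Rp ⊗[R] Q) := (faithfulSMul_iff_algebraMap_injective _ _).mpr hinj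
  have : IsIntegrallyClosedIn Rp (Rp ⊗[R] Q) := isIntegrallyClosedIn_iff.mpr ⟨hinj, @hic⟩
  exact ⟨hinj.isDomain _, .of_isIntegrallyClosedIn Rp (Rp ⊗[R] Q)⟩

lemma normal_loc_tensor (k A₀ B₀ : Type) [Field k] [PerfectField k] [CommRing A₀] [CommRing B₀]
    [Algebra k A₀] [Algebra k B₀] [Algebra.FiniteType k A₀] [Algebra.FiniteType k B₀]
    (r : Ideal (A₀ ⊗[k] B₀)) [r.IsPrime] (p : Ideal A₀) [p.IsPrime] (q : Ideal B₀) [q.IsPrime]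
    (hp : p = r.comap (algebraMap A₀ (A₀ ⊗[k] B₀)))
    (hq : q = r.comap (Algebra.TensorProduct.includeRight : B₀ →ₐ[k] A₀ ⊗[k] B₀))
    (hA : IsDomain (Localization.AtPrime p)) (hA' : IsIntegrallyClosed (Localization.AtPrime p))
    (hB : IsDomain (Localization.AtPrime q)) (hB' : IsIntegrallyClosed (Localization.AtPrime q)) :
    IsDomain (Localization.AtPrime r) ∧ IsIntegrallyClosed (Localization.AtPrime r) := by
  let A := Localization.AtPrime p
  let B := Localization.AtPrime q
  have : Algebra.EssFiniteType k A := inferInstance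
  have : Algebra.EssFiniteType k B := inferInstance
  obtain ⟨Q, _, f, hf⟩ := good_tensor k A B
  let Tr := Localization.AtPrime r
  -- first step
  let φ₁ : A₀ ⊗[k] B₀ →ₐ[k] A ⊗[k] B₀ :=
    Algebra.TensorProduct.map (IsScalarTower.toAlgHom k A₀ A) (AlgHom.id k B₀)
  let _ : Algebra (A₀ ⊗[k] B₀) (A ⊗[k] B₀) := φ₁.toRingHom.toAlgebra
  have : IsScalarTower A₀ (A₀ ⊗[k] B₀) (A ⊗[k] B₀) :=
    IsScalarTower.of_algebraMap_eq (R := A₀) (S := A₀ ⊗[k] B₀) (A := A ⊗[k] B₀) fun x ↦ by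
      change algebraMap A₀ A x ⊗ₜ[k] (1 : B₀) = φ₁ (x ⊗ₜ[k] (1 : B₀))
      rw [Algebra.TensorProduct.map_tmul]; rfl
  have hl₁ := IsLocalization.tensorProduct_tensorProduct k B₀ p.primeCompl A <| by
    ext x
    change φ₁ ((1 : A₀) ⊗ₜ[k] x) = (1 : A) ⊗ₜ x
    rw [Algebra.TensorProduct.map_tmul, map_one]; rfl
  have hle₁ : Algebra.algebraMapSubmonoid (A₀ ⊗[k] B₀) p.primeCompl ≤ r.primeCompl := by
    rintro _ ⟨x, hx, rfl⟩ h
    exact hx (hp ▸ h)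
  let _ : Algebra (A ⊗[k] B₀) Tr :=
    IsLocalization.localizationAlgebraOfSubmonoidLe (A ⊗[k] B₀) Tr _ _ hle₁
  have : IsScalarTower (A₀ ⊗[k] B₀) (A ⊗[k] B₀) Tr :=
    IsLocalization.localization_isScalarTower_of_submonoid_le (A ⊗[k] B₀) Tr _ _ hle₁
  have hloc₁ := IsLocalization.isLocalization_of_submonoid_le (A ⊗[k] B₀) Tr _ _ hle₁
  -- second step
  let φ₂ : A ⊗[k] B₀ →ₐ[k] A ⊗[k] B :=
    Algebra.TensorProduct.map (AlgHom.id k A) (IsScalarTower.toAlgHom k B₀ B)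
  let _ : Algebra (A ⊗[k] B₀) (A ⊗[k] B) := φ₂.toRingHom.toAlgebra
  have : IsScalarTower A (A ⊗[k] B₀) (A ⊗[k] B) :=
    IsScalarTower.of_algebraMap_eq (R := A) (S := A ⊗[k] B₀) (A := A ⊗[k] B) fun x ↦ by
      change x ⊗ₜ[k] (1 : B) = φ₂ (x ⊗ₜ[k] (1 : B₀))
      rw [Algebra.TensorProduct.map_tmul, map_one]; rfl
  have hl₂ := IsLocalization.tensorProduct_tensorProduct_right k A q.primeCompl B <| by
    ext x
    change φ₂ ((1 : A) ⊗ₜ[k] x) = (1 : A) ⊗ₜ (algebraMap B₀ B x)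
    rw [Algebra.TensorProduct.map_tmul, map_one]; rfl
  have hle₂ : q.primeCompl.map (Algebra.TensorProduct.includeRight (R := k) (A := A)) ≤
      r.primeCompl.map (algebraMap (A₀ ⊗[k] B₀) (A ⊗[k] B₀)) := by
    rintro _ ⟨x, hx, rfl⟩
    refine ⟨1 ⊗ₜ x, fun h ↦ hx (hq ▸ h), ?_⟩
    change φ₁ ((1 : A₀) ⊗ₜ[k] x) = (1 : A) ⊗ₜ x
    rw [Algebra.TensorProduct.map_tmul, map_one]; rfl
  let _ : Algebra (A ⊗[k] B) Tr :=
    IsLocalization.localizationAlgebraOfSubmonoidLe (A ⊗[k] B) Tr _ _ hle₂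
  have : IsScalarTower (A ⊗[k] B₀) (A ⊗[k] B) Tr :=
    IsLocalization.localization_isScalarTower_of_submonoid_le (A ⊗[k] B) Tr _ _ hle₂
  have hloc₂ := IsLocalization.isLocalization_of_submonoid_le (A ⊗[k] B) Tr _ _ hle₂
  exact good_localization (Rp := Tr) hf
    ((r.primeCompl.map (algebraMap (A₀ ⊗[k] B₀) (A ⊗[k] B₀))).map
      (algebraMap (A ⊗[k] B₀) (A ⊗[k] B)))

lemma normal_of_iso {R S : CommRingCat.{0}} (e : R ≅ S) (h : IsDomain R ∧ IsIntegrallyClosed R) :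
    IsDomain S ∧ IsIntegrallyClosed S := by
  obtain ⟨_, _⟩ := h
  exact ⟨e.commRingCatIsoToRingEquiv.symm.toMulEquiv.isDomain R,
    IsIntegrallyClosed.of_equiv e.commRingCatIsoToRingEquiv⟩

lemma IsNormalScheme.of_openImmersion {U X : Scheme.{0}} (φ : U ⟶ X) [IsOpenImmersion φ]
    (h : IsNormalScheme X) : IsNormalScheme U :=
  fun x ↦ normal_of_iso (asIso (φ.stalkMap x)) (h (φ x))

lemma IsNormalScheme.of_cover {X : Scheme.{0}} (𝒰 : X.OpenCover)
    (h : ∀ i, IsNormalScheme (𝒰.X i)) : IsNormalScheme X := by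
  intro x
  obtain ⟨i, y, rfl⟩ := 𝒰.exists_eq x
  exact normal_of_iso (asIso ((𝒰.f i).stalkMap y)).symm (h i y)

lemma isNormalScheme_tensor (k A B : Type) [Field k] [PerfectField k] [CommRing A] [CommRing B]
    [Algebra k A] [Algebra k B] [Algebra.FiniteType k A] [Algebra.FiniteType k B]
    (hA : IsNormalScheme (Spec (.of A))) (hB : IsNormalScheme (Spec (.of B))) :
    IsNormalScheme (Spec (.of (A ⊗[k] B))) := by
  intro r
  let p : PrimeSpectrum A := PrimeSpectrum.comap (algebraMap A (A ⊗[k] B)) r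
  let q : PrimeSpectrum B := PrimeSpectrum.comap
    (Algebra.TensorProduct.includeRight : B →ₐ[k] A ⊗[k] B).toRingHom r
  have h1 := normal_of_iso (Spec.stalkIso (.of A) p) (hA p)
  have h2 := normal_of_iso (Spec.stalkIso (.of B) q) (hB q)
  refine normal_of_iso (Spec.stalkIso (.of (A ⊗[k] B)) r).symm ?_
  have hr : r.asIdeal.IsPrime := PrimeSpectrum.isPrime r
  exact normal_loc_tensor k A B r.asIdeal p.asIdeal q.asIdeal rfl rfl h1.1 h1.2 h2.1 h2.2

lemma isNormalScheme_affine {k : Type} [Field k] [PerfectField k] (R S : CommRingCat.{0})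
    (f : Spec R ⟶ Spec (CommRingCat.of k)) (g : Spec S ⟶ Spec (CommRingCat.of k))
    [hf : LocallyOfFiniteType f] [hg : LocallyOfFiniteType g]
    (hR : IsNormalScheme (Spec R)) (hS : IsNormalScheme (Spec S)) :
    IsNormalScheme (pullback f g) := by
  obtain ⟨φ, rfl⟩ := Spec.map_surjective f
  obtain ⟨ψ, rfl⟩ := Spec.map_surjective g
  rw [HasRingHomProperty.Spec_iff (P := @LocallyOfFiniteType)] at hf hg
  let _ : Algebra k R := φ.hom.toAlgebra
  let _ : Algebra k S := ψ.hom.toAlgebra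
  have : Algebra.FiniteType k R := hf
  have : Algebra.FiniteType k S := hg
  exact (isNormalScheme_tensor k R S hR hS).of_openImmersion (pullbackSpecIso k R S).hom

theorem stmt2 {k : Type} [Field k] [PerfectField k]
    (X Y : Scheme)
    (fX : X ⟶ Spec (CommRingCat.of k)) (fY : Y ⟶ Spec (CommRingCat.of k))
    -- `X` and `Y` are of finite type over `k`
    [LocallyOfFiniteType fX] [LocallyOfFiniteType fY]
    [CompactSpace X] [CompactSpace Y]
    -- `X` and `Y` are reduced and normal
    [IsReduced X] [IsReduced Y]
    (hX : IsNormalScheme X) (hY : IsNormalScheme Y) :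
    IsNormalScheme (pullback fX fY) := by
  refine IsNormalScheme.of_cover (Scheme.Pullback.openCoverOfLeftRight
    X.affineOpenCover.openCover Y.affineOpenCover.openCover fX fY) ?_
  rintro ⟨i, j⟩
  have h1 : IsOpenImmersion (X.affineOpenCover.f i) :=
    inferInstanceAs (IsOpenImmersion (X.affineOpenCover.openCover.f i))
  have h2 : IsOpenImmersion (Y.affineOpenCover.f j) :=
    inferInstanceAs (IsOpenImmersion (Y.affineOpenCover.openCover.f j))
  have h3 : LocallyOfFiniteType (X.affineOpenCover.f i) := locallyOfFiniteType_of_isOpenImmersion _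
  have h4 : LocallyOfFiniteType (Y.affineOpenCover.f j) := locallyOfFiniteType_of_isOpenImmersion _
  exact isNormalScheme_affine (X.affineOpenCover.X i) (Y.affineOpenCover.X j)
    (X.affineOpenCover.f i ≫ fX) (Y.affineOpenCover.f j ≫ fY)
    (hX.of_openImmersion (X.affineOpenCover.f i)) (hY.of_openImmersion (Y.affineOpenCover.f j))
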